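/- arXiv:1612.07227 — 2 statements merged into one kernel-verified Lean document; each statement's English description precedes it below -/
import Mathlib

section
/- Let G be a group generated by a finite set S and let H be a stable subgroup of G. Then H has bounded packing in G: for every D ≥ 0 there exists N ∈ ℕ such that among any N distinct left cosets of H in G there are two at d_S-distance at least D. -/
open Pointwise

section BasicDefs

variable {G : Type*} [Group G]

/-- The word length of `g` with respect to the generating set `S`
(words use letters from `S ∪ S⁻¹`). -/
noncomputable def wordLength (S : Set G) (g : G) : ℕ :=
  sInf {n : ℕ | ∃ l : List G, l.length = n ∧ (∀ x ∈ l, x ∈ S ∨ x⁻¹ ∈ S) ∧ l.prod = g}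

/-- The word metric on `G` with respect to the generating set `S`. -/
noncomputable def wordDist (S : Set G) (g h : G) : ℝ :=
  (wordLength S (g⁻¹ * h) : ℝ)

/-- The closed `r`-neighborhood of a subset `A` with respect to the word metric `d_S`. -/
def nbhd (S : Set G) (r : ℝ) (A : Set G) : Set G :=
  {g : G | ∃ a ∈ A, wordDist S g a ≤ r}

/-- The distance between two subsets: the infimum of distances between their elements. -/
noncomputable def setDist (S : Set G) (A B : Set G) : ℝ :=
  sInf {r : ℝ | ∃ a ∈ A, ∃ b ∈ B, r = wordDist S a b}

/-- The conjugate subgroup `H^g = g H g⁻¹`. -/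
def conjSub (g : G) (H : Subgroup G) : Subgroup G :=
  H.map (MulAut.conj g).toMonoidHom

end BasicDefs

/-- `γ` restricted to `{0, …, n}` is a `(K, ε)`-quasigeodesic for the distance function `d`. -/
def IsQuasigeodesic {α : Type*} (d : α → α → ℝ) (K ε : ℝ) (n : ℕ) (γ : ℕ → α) : Prop :=
  ∀ i j : ℕ, i ≤ n → j ≤ n →
    (1 / K) * |(i : ℝ) - (j : ℝ)| - ε ≤ d (γ i) (γ j) ∧
      d (γ i) (γ j) ≤ K * |(i : ℝ) - (j : ℝ)| + ε

/-- `γ` restricted to `{0, …, n}` is a geodesic for the distance function `d`. -/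
def IsGeodesic {α : Type*} (d : α → α → ℝ) (n : ℕ) (γ : ℕ → α) : Prop :=
  ∀ i j : ℕ, i ≤ n → j ≤ n → d (γ i) (γ j) = |(i : ℝ) - (j : ℝ)|

/-- The path `γ` (on `{0, …, n}`) is `f`-stable: every `(K, ε)`-quasigeodesic with endpoints
on `γ` stays in the `f K ε`-neighborhood of `γ`. -/
def IsStablePath {α : Type*} (d : α → α → ℝ) (f : ℝ → ℝ → ℝ) (n : ℕ) (γ : ℕ → α) : Prop :=
  ∀ K ε : ℝ, 1 ≤ K → 0 ≤ ε → ∀ (m : ℕ) (η : ℕ → α),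
    IsQuasigeodesic d K ε m η →
    (∃ i ≤ n, η 0 = γ i) → (∃ i ≤ n, η m = γ i) →
    ∀ j ≤ m, ∃ i ≤ n, d (η j) (γ i) ≤ f K ε

/-- The Gromov product `⟨x, y⟩_w` with respect to a distance function `d`. -/
noncomputable def gromovProd {α : Type*} (d : α → α → ℝ) (w x y : α) : ℝ :=
  (d w x + d w y - d x y) / 2

/-- Gromov hyperbolicity of a distance function, via the four-point condition. -/
def IsHyperbolicDist {α : Type*} (d : α → α → ℝ) : Prop :=
  ∃ δ : ℝ, 0 ≤ δ ∧ ∀ w x y z : α,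
    min (gromovProd d w x y) (gromovProd d w y z) - δ ≤ gromovProd d w x z

section GroupDefs

variable {G : Type*} [Group G]

/-- `H` is a stable subgroup of `(G, d_S)` with stability function `f`: `H` has a finite
generating set `T` such that the inclusion `(H, d_T) → (G, d_S)` is a quasi-isometric
embedding sending every `d_T`-geodesic to an `f`-stable quasigeodesic of `(G, d_S)`. -/
def IsStableSubgroupWith (S : Set G) (H : Subgroup G) (f : ℝ → ℝ → ℝ) : Prop :=
  ∃ T : Set H, T.Finite ∧ Subgroup.closure T = ⊤ ∧
    (∃ μ c : ℝ, 1 ≤ μ ∧ 0 ≤ c ∧ ∀ h₁ h₂ : H,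
      (1 / μ) * wordDist T h₁ h₂ - c ≤ wordDist S (h₁ : G) (h₂ : G) ∧
        wordDist S (h₁ : G) (h₂ : G) ≤ μ * wordDist T h₁ h₂ + c) ∧
    ∀ (n : ℕ) (γ : ℕ → H), IsGeodesic (wordDist T) n γ →
      (∃ K ε : ℝ, 1 ≤ K ∧ 0 ≤ ε ∧
        IsQuasigeodesic (wordDist S) K ε n (fun i => (γ i : G))) ∧
      IsStablePath (wordDist S) f n (fun i => (γ i : G))

/-- `H` is a stable subgroup of `(G, d_S)`. -/
def IsStableSubgroup (S : Set G) (H : Subgroup G) : Prop :=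
  ∃ f : ℝ → ℝ → ℝ, IsStableSubgroupWith S H f

/-- The family `Q` of subgroups is hyperbolically embedded in `(G, X)`:
(Q1) geometric separation, (Q2) finite generation, (Q3) uniform quasi-isometric embedding. -/
def IsHypEmbFamily {G : Type*} [Group G] {ι : Type*} (X : Set G) (Q : ι → Subgroup G) : Prop :=
  (∀ ε : ℝ, 0 < ε → ∃ R : ℝ, ∀ (g : G) (i j : ι),
      (∃ a ∈ (Q i : Set G) ∩ nbhd X ε (g • (Q j : Set G)),
        ∃ b ∈ (Q i : Set G) ∩ nbhd X ε (g • (Q j : Set G)), R ≤ wordDist X a b) →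
      i = j ∧ g ∈ Q i) ∧
  ∃ Y : ι → Set G, (∀ i, (Y i).Finite ∧ Y i ⊆ (Q i : Set G) ∧ Subgroup.closure (Y i) = Q i) ∧
    ∃ μ c : ℝ, 1 ≤ μ ∧ 0 ≤ c ∧ ∀ i : ι, ∀ h ∈ Q i,
      (wordLength (Y i) h : ℝ) ≤ μ * (wordLength X h : ℝ) + c

/-- The subset `H` of `G` satisfies the WPD condition in `(G, X)`. -/
def WPDSet (X : Set G) (H : Set G) : Prop :=
  ∀ ε : ℝ, 0 < ε → ∃ N : ℝ, 0 < N ∧ ∀ h₁ h₂ : G, h₁ ∈ H → h₂ ∈ H →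
    N < wordDist X h₁ h₂ →
    {g : G | wordDist X h₁ (g * h₁) < ε ∧ wordDist X h₂ (g * h₂) < ε}.Finite

/-- A quasimorphism on `G`. -/
def IsQuasimorphism (q : G → ℝ) : Prop :=
  ∃ D : ℝ, 0 ≤ D ∧ ∀ x y : G, |q (x * y) - q x - q y| ≤ D

/-- A homogeneous quasimorphism on `G`. -/
def IsHomogeneousQM (q : G → ℝ) : Prop :=
  IsQuasimorphism q ∧ ∀ (x : G) (n : ℕ), q (x ^ n) = (n : ℝ) * q x

/-- `H` is a quasiconvex subgroup of `(G, d_S)`: every geodesic with endpoints in `H`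
lies in a uniformly bounded neighborhood of `H`. -/
def IsQuasiconvex (S : Set G) (H : Subgroup G) : Prop :=
  ∃ C : ℝ, 0 ≤ C ∧ ∀ (n : ℕ) (γ : ℕ → G), IsGeodesic (wordDist S) n γ →
    γ 0 ∈ H → γ n ∈ H → ∀ i ≤ n, ∃ h ∈ H, wordDist S (γ i) h ≤ C

end GroupDefs

section WordMetric

variable {G : Type*} [Group G]

theorem bp_exists_word (S : Set G) (hS : Subgroup.closure S = ⊤) (g : G) :
    ∃ l : List G, (∀ x ∈ l, x ∈ S ∨ x⁻¹ ∈ S) ∧ l.prod = g := by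
  have hg : g ∈ Subgroup.closure S := by rw [hS]; trivial
  induction hg using Subgroup.closure_induction with
  | mem x hx => exact ⟨[x], by simp [hx], by simp⟩
  | one => exact ⟨[], by simp, by simp⟩
  | mul x y _ _ hx hy =>
    obtain ⟨l, hl, rfl⟩ := hx
    obtain ⟨k, hk, rfl⟩ := hy
    refine ⟨l ++ k, ?_, by simp⟩
    intro x hx
    rcases List.mem_append.1 hx with h | h
    · exact hl x h
    · exact hk x h
  | inv x _ hx =>
    obtain ⟨l, hl, rfl⟩ := hx
    refine ⟨(l.map (fun x => x⁻¹)).reverse, ?_, (List.prod_inv_reverse l).symm⟩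
    intro x hx
    simp only [List.mem_reverse, List.mem_map] at hx
    obtain ⟨a, ha, rfl⟩ := hx
    rw [inv_inv]
    exact (hl a ha).symm

theorem bp_min_word (S : Set G) (hS : Subgroup.closure S = ⊤) (g : G) :
    ∃ l : List G, l.length = wordLength S g ∧ (∀ x ∈ l, x ∈ S ∨ x⁻¹ ∈ S) ∧ l.prod = g := by
  obtain ⟨l, hl, hg⟩ := bp_exists_word S hS g
  exact Nat.sInf_mem (s := {n : ℕ | ∃ l : List G, l.length = n ∧
    (∀ x ∈ l, x ∈ S ∨ x⁻¹ ∈ S) ∧ l.prod = g}) ⟨l.length, l, rfl, hl, hg⟩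

theorem bp_wl_le (S : Set G) (l : List G) (hl : ∀ x ∈ l, x ∈ S ∨ x⁻¹ ∈ S) :
    wordLength S l.prod ≤ l.length :=
  Nat.sInf_le ⟨l, rfl, hl, rfl⟩

theorem bp_wl_one (S : Set G) : wordLength S (1 : G) = 0 := by
  have := bp_wl_le S [] (by simp)
  simpa using this

theorem bp_wl_mul (S : Set G) (hS : Subgroup.closure S = ⊤) (a b : G) :
    wordLength S (a * b) ≤ wordLength S a + wordLength S b := by
  obtain ⟨l, h1, h2, h3⟩ := bp_min_word S hS a
  obtain ⟨k, k1, k2, k3⟩ := bp_min_word S hS b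
  have := bp_wl_le S (l ++ k) (by
    intro x hx
    rcases List.mem_append.1 hx with h | h
    · exact h2 x h
    · exact k2 x h)
  rw [List.prod_append, h3, k3, List.length_append, h1, k1] at this
  exact this

theorem bp_wl_inv_le (S : Set G) (hS : Subgroup.closure S = ⊤) (a : G) :
    wordLength S a⁻¹ ≤ wordLength S a := by
  obtain ⟨l, h1, h2, h3⟩ := bp_min_word S hS a
  have := bp_wl_le S (l.map (fun x => x⁻¹)).reverse (by
    intro x hx
    simp only [List.mem_reverse, List.mem_map] at hx
    obtain ⟨a, ha, rfl⟩ := hx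
    rw [inv_inv]
    exact (h2 a ha).symm)
  rw [← List.prod_inv_reverse, h3] at this
  simpa [h1] using this

theorem bp_wl_inv (S : Set G) (hS : Subgroup.closure S = ⊤) (a : G) :
    wordLength S a⁻¹ = wordLength S a := by
  apply le_antisymm (bp_wl_inv_le S hS a)
  have := bp_wl_inv_le S hS a⁻¹
  rwa [inv_inv] at this

theorem bp_self (S : Set G) (a : G) : wordDist S a a = 0 := by
  simp [wordDist, bp_wl_one]

theorem bp_nonneg (S : Set G) (a b : G) : 0 ≤ wordDist S a b := Nat.cast_nonneg _

theorem bp_comm (S : Set G) (hS : Subgroup.closure S = ⊤) (a b : G) :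
    wordDist S a b = wordDist S b a := by
  unfold wordDist
  rw [← bp_wl_inv S hS (a⁻¹ * b)]
  simp

theorem bp_tri (S : Set G) (hS : Subgroup.closure S = ⊤) (a b c : G) :
    wordDist S a c ≤ wordDist S a b + wordDist S b c := by
  unfold wordDist
  have := bp_wl_mul S hS (a⁻¹ * b) (b⁻¹ * c)
  have e : a⁻¹ * b * (b⁻¹ * c) = a⁻¹ * c := by group
  rw [e] at this
  exact_mod_cast this

theorem bp_left (S : Set G) (g a b : G) : wordDist S (g * a) (g * b) = wordDist S a b := by
  unfold wordDist
  congr 2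
  group

theorem bp_ball_finite (S : Set G) (hfin : S.Finite) (hS : Subgroup.closure S = ⊤) (R : ℝ) :
    {g : G | wordDist S 1 g ≤ R}.Finite := by
  have key : ∀ n : ℕ, {g : G | ∃ l : List G, l.length = n ∧ (∀ x ∈ l, x ∈ S ∨ x⁻¹ ∈ S) ∧
      l.prod = g}.Finite := by
    intro n
    induction n with
    | zero =>
      apply (Set.finite_singleton (1 : G)).subset
      rintro g ⟨l, h1, -, rfl⟩
      rw [List.length_eq_zero_iff] at h1
      simp [h1]
    | succ n ih =>
      apply ((hfin.union hfin.inv).mul ih).subset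
      rintro g ⟨l, h1, h2, rfl⟩
      match l, h1, h2 with
      | a :: t, h1, h2 =>
        rw [List.prod_cons]
        refine Set.mul_mem_mul ?_ ⟨t, by simpa using h1, fun x hx => h2 x (by simp [hx]), rfl⟩
        exact h2 a (by simp)
  apply (Set.Finite.biUnion (Set.finite_Iic ⌊R⌋₊) (fun n _ => key n)).subset
  intro g hg
  obtain ⟨l, h1, h2, h3⟩ := bp_min_word S hS g
  simp only [Set.mem_iUnion]
  refine ⟨wordLength S g, ?_, l, h1, h2, h3⟩
  have : (wordLength S g : ℝ) ≤ R := by simpa [wordDist] using hg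
  exact Nat.le_floor this

theorem bp_geod (S : Set G) (hS : Subgroup.closure S = ⊤) (a b : G) :
    ∃ (n : ℕ) (γ : ℕ → G), IsGeodesic (wordDist S) n γ ∧ γ 0 = a ∧ γ n = b ∧
      wordDist S a b = n := by
  obtain ⟨l, h1, h2, h3⟩ := bp_min_word S hS (a⁻¹ * b)
  have lip : ∀ i j : ℕ, i ≤ j → j ≤ l.length →
      wordDist S (a * (l.take i).prod) (a * (l.take j).prod) ≤ (j : ℝ) - i := by
    intro i j hij hj
    rw [bp_left]
    have e : l.take j = l.take i ++ (l.drop i).take (j - i) := by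
      rw [← List.take_add]; congr 1; omega
    unfold wordDist
    rw [e, List.prod_append, inv_mul_cancel_left]
    have := bp_wl_le S ((l.drop i).take (j - i))
      (fun x hx => h2 x (List.mem_of_mem_drop (List.mem_of_mem_take hx)))
    have h4 : ((l.drop i).take (j - i)).length ≤ j - i := List.length_take_le _ _
    rw [← Nat.cast_sub hij]
    exact_mod_cast this.trans h4
  have hd : wordDist S a b = l.length := by unfold wordDist; rw [h1]
  have h0 : a * (l.take 0).prod = a := by simp
  have hn : a * (l.take l.length).prod = b := by simp [h3]
  have main : ∀ i j : ℕ, i ≤ j → j ≤ l.length →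
      wordDist S (a * (l.take i).prod) (a * (l.take j).prod) = (j : ℝ) - i := by
    intro i j hij hj
    apply le_antisymm (lip i j hij hj)
    have t1 := lip 0 i (Nat.zero_le _) (hij.trans hj)
    have t2 := lip j l.length hj le_rfl
    rw [h0] at t1
    rw [hn] at t2
    have t3 := bp_tri S hS a (a * (l.take i).prod) b
    have t4 := bp_tri S hS (a * (l.take i).prod) (a * (l.take j).prod) b
    push_cast at t1
    linarith
  refine ⟨l.length, fun i => a * (l.take i).prod, ?_, h0, hn, hd⟩
  intro i j hi hj
  rcases le_total i j with h | h
  · have h' : (i : ℝ) ≤ j := by exact_mod_cast h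
    rw [abs_sub_comm, abs_of_nonneg (by linarith)]
    exact main i j h hj
  · have h' : (j : ℝ) ≤ i := by exact_mod_cast h
    rw [abs_of_nonneg (by linarith), bp_comm S hS]
    exact main j i h hi

theorem bp_nearest (S : Set G) (H : Subgroup G) (w g : G) :
    ∃ p : H, ∀ q : H, wordDist S w (g * p) ≤ wordDist S w (g * q) := by
  obtain ⟨p, hp⟩ := exists_minimal_of_wellFoundedLT
    (fun n : ℕ => ∃ q : H, wordLength S (w⁻¹ * (g * q)) = n) ⟨_, 1, rfl⟩
  obtain ⟨q, hq⟩ := hp.prop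
  refine ⟨q, fun r => ?_⟩
  unfold wordDist
  rw [hq]
  rcases le_total p (wordLength S (w⁻¹ * (g * r))) with h | h
  · exact_mod_cast h
  · exact_mod_cast hp.le_of_le ⟨r, rfl⟩ h

end WordMetric

section Coarse

variable {G : Type*} [Group G]

theorem bp_qg_of_le (S : Set G) (hS : Subgroup.closure S = ⊤) (K ε : ℝ) (n : ℕ) (γ : ℕ → G)
    (h : ∀ i j : ℕ, i ≤ j → j ≤ n →
      (1 / K) * ((j : ℝ) - i) - ε ≤ wordDist S (γ i) (γ j) ∧
        wordDist S (γ i) (γ j) ≤ K * ((j : ℝ) - i) + ε) :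
    IsQuasigeodesic (wordDist S) K ε n γ := by
  intro i j hi hj
  rcases le_total i j with hij | hij
  · have h' : (i : ℝ) ≤ j := by exact_mod_cast hij
    rw [abs_sub_comm, abs_of_nonneg (by linarith)]
    exact h i j hij hj
  · have h' : (j : ℝ) ≤ i := by exact_mod_cast hij
    rw [abs_of_nonneg (by linarith), bp_comm S hS]
    exact h j i hij hi

/-- A geodesic to a nearest point, followed by a quasigeodesic, is a quasigeodesic. -/
theorem bp_concat (S : Set G) (hS : Subgroup.closure S = ⊤) (K ε : ℝ) (hK : 1 ≤ K) (hε : 0 ≤ ε)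
    (w : G) (n : ℕ) (γ : ℕ → G) (hγ : IsQuasigeodesic (wordDist S) K ε n γ)
    (hmin : ∀ l ≤ n, wordDist S w (γ 0) ≤ wordDist S w (γ l)) :
    ∃ (m : ℕ) (η : ℕ → G), IsQuasigeodesic (wordDist S) (3 * K) ε m η ∧ η 0 = w ∧ η m = γ n ∧
      ∃ k ≤ m, η k = γ 0 := by
  obtain ⟨m, α, hα, α0, αm, hd⟩ := bp_geod S hS w (γ 0)
  have hKpos : 0 < K := by linarith
  obtain ⟨η, e1, e2⟩ : ∃ η : ℕ → G, (∀ s ≤ m, η s = α s) ∧ ∀ s, m ≤ s → η s = γ (s - m) := by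
    refine ⟨fun t => if t ≤ m then α t else γ (t - m), ?_, ?_⟩
    · intro s hs; simp [hs]
    · intro s hs
      by_cases h : s ≤ m
      · have : s = m := le_antisymm h hs
        subst this
        simp [αm]
      · simp [h]
  refine ⟨m + n, η, ?_, ?_, ?_, m, by omega, ?_⟩
  · apply bp_qg_of_le S hS
    intro s t hst ht
    have hst' : (s : ℝ) ≤ t := by exact_mod_cast hst
    have hinv : 1 / (3 * K) ≤ 1 := by
      rw [div_le_one (by linarith)]; linarith
    have hinv2 : 1 / (3 * K) ≤ 1 / K := by
      apply one_div_le_one_div_of_le hKpos; linarith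
    rcases le_total t m with htm | htm
    · rw [e1 s (by omega), e1 t htm, hα s t (by omega) htm, abs_sub_comm,
        abs_of_nonneg (by linarith)]
      constructor
      · nlinarith
      · nlinarith
    · rcases le_total m s with hsm | hsm
      · rw [e2 s hsm, e2 t htm]
        have := hγ (s - m) (t - m) (by omega) (by omega)
        rw [Nat.cast_sub hsm, Nat.cast_sub htm, abs_sub_comm,
          abs_of_nonneg (by linarith)] at this
        obtain ⟨a, b⟩ := this
        have e : (t : ℝ) - m - (s - m) = t - s := by ring
        rw [e] at a b
        constructor
        · nlinarith
        · nlinarith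
      · rw [e1 s hsm, e2 t htm]
        obtain ⟨l, rfl⟩ := Nat.exists_eq_add_of_le htm
        have hl : l ≤ n := by omega
        rw [Nat.add_sub_cancel_left]
        have hsm' : (s : ℝ) ≤ m := by exact_mod_cast hsm
        have a1 : wordDist S (α s) (γ 0) = m - s := by
          rw [← αm, hα s m hsm le_rfl, abs_sub_comm, abs_of_nonneg (by linarith)]
        have a2 : wordDist S w (α s) = s := by
          rw [← α0, hα 0 s (by omega) hsm]
          simp
        obtain ⟨b1, b2⟩ := hγ 0 l (by omega) hl
        have hl0 : (0 : ℝ) ≤ l := Nat.cast_nonneg _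
        have eab : |((0 : ℕ) : ℝ) - (l : ℝ)| = l := by simp
        rw [eab] at b1 b2
        have c1 := hmin l hl
        rw [hd] at c1
        have t1 := bp_tri S hS w (α s) (γ l)
        have t2 := bp_tri S hS (γ 0) (α s) (γ l)
        have t3 := bp_tri S hS (α s) (γ 0) (γ l)
        rw [bp_comm S hS (γ 0) (α s)] at t2
        push_cast
        constructor
        · have hX : (m : ℝ) - s ≤ wordDist S (α s) (γ l) := by linarith
          have hY : (1 / K) * l ≤ 2 * wordDist S (α s) (γ l) + ε := by linarith
          have hY' : (l : ℝ) ≤ K * (2 * wordDist S (α s) (γ l) + ε) := by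
            rw [one_div, inv_mul_le_iff₀ hKpos] at hY
            exact hY
          have hX0 : 0 ≤ wordDist S (α s) (γ l) := bp_nonneg _ _ _
          rw [sub_le_iff_le_add, one_div, inv_mul_le_iff₀ (by linarith)]
          nlinarith [mul_nonneg (sub_nonneg.2 hK) hX0, mul_nonneg hKpos.le hε]
        · nlinarith
  · rw [e1 0 (by omega), α0]
  · rw [e2 (m + n) (by omega)]
    simp
  · rw [e1 m le_rfl, αm]

/-- Morse property of translates of geodesics of `H`, with endpoints perturbed by `r`. -/
theorem bp_morse (S : Set G) (hS : Subgroup.closure S = ⊤) (H : Subgroup G) (T : Set H)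
    (f : ℝ → ℝ → ℝ)
    (hst : ∀ (n : ℕ) (γ : ℕ → H), IsGeodesic (wordDist T) n γ →
      IsStablePath (wordDist S) f n (fun i => (γ i : G)))
    (K ε r : ℝ) (hK : 1 ≤ K) (hε : 0 ≤ ε) (hr : 0 ≤ r) :
    ∃ R : ℝ, 0 ≤ R ∧ ∀ (g : G) (n : ℕ) (h : ℕ → H), IsGeodesic (wordDist T) n h →
      ∀ (m : ℕ) (η : ℕ → G), IsQuasigeodesic (wordDist S) K ε m η →
        wordDist S (η 0) (g * h 0) ≤ r → wordDist S (η m) (g * h n) ≤ r →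
        ∀ j ≤ m, ∃ i ≤ n, wordDist S (η j) (g * h i) ≤ R := by
  refine ⟨max 0 (f K (ε + 2 * r + 2 * K)), le_max_left _ _, ?_⟩
  intro g n h hh m η hη h0 hm j hj
  have hKpos : 0 < K := by linarith
  let η' : ℕ → G := fun t => if t = 0 then (h 0 : G) else if t ≤ m + 1 then g⁻¹ * η (t - 1)
    else (h n : G)
  let σ : ℕ → ℕ := fun t => if t = 0 then 0 else if t ≤ m + 1 then t - 1 else m
  have hσm : ∀ t, σ t ≤ m := by
    intro t; simp only [σ]; split_ifs <;> omega
  have hσ1 : ∀ t, t ≤ m + 2 → σ t ≤ t ∧ t ≤ σ t + 2 := by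
    intro t ht; simp only [σ]; split_ifs <;> omega
  have hσ2 : ∀ t, wordDist S (η' t) (g⁻¹ * η (σ t)) ≤ r := by
    intro t
    simp only [σ, η']
    split_ifs
    · rw [bp_comm S hS, ← bp_left S g]; simpa using h0
    · rw [bp_self]; exact hr
    · rw [bp_comm S hS, ← bp_left S g]; simpa using hm
  have hq : IsQuasigeodesic (wordDist S) K (ε + 2 * r + 2 * K) (m + 2) η' := by
    intro s t hs ht
    obtain ⟨a1, a2⟩ := hη (σ s) (σ t) (hσm s) (hσm t)
    rw [← bp_left S g⁻¹] at a1 a2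
    have s1 := hσ2 s
    have s2 := hσ2 t
    have t1 := bp_tri S hS (η' s) (g⁻¹ * η (σ s)) (η' t)
    have t2 := bp_tri S hS (g⁻¹ * η (σ s)) (g⁻¹ * η (σ t)) (η' t)
    have t3 := bp_tri S hS (g⁻¹ * η (σ s)) (η' s) (g⁻¹ * η (σ t))
    have t4 := bp_tri S hS (η' s) (η' t) (g⁻¹ * η (σ t))
    rw [bp_comm S hS (g⁻¹ * η (σ t)) (η' t)] at t2
    rw [bp_comm S hS (g⁻¹ * η (σ s)) (η' s)] at t3
    obtain ⟨u1, u2⟩ := hσ1 s hs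
    obtain ⟨v1, v2⟩ := hσ1 t ht
    have u1' : (σ s : ℝ) ≤ s := by exact_mod_cast u1
    have u2' : (s : ℝ) ≤ σ s + 2 := by exact_mod_cast u2
    have v1' : (σ t : ℝ) ≤ t := by exact_mod_cast v1
    have v2' : (t : ℝ) ≤ σ t + 2 := by exact_mod_cast v2
    have w1 : |(s : ℝ) - t| ≤ |(σ s : ℝ) - σ t| + 2 := by
      have := le_abs_self ((σ s : ℝ) - σ t)
      have := neg_abs_le ((σ s : ℝ) - σ t)
      rw [abs_le]; constructor <;> linarith
    have w2 : |(σ s : ℝ) - σ t| ≤ |(s : ℝ) - t| + 2 := by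
      have := le_abs_self ((s : ℝ) - t)
      have := neg_abs_le ((s : ℝ) - t)
      rw [abs_le]; constructor <;> linarith
    have hi0 : 0 < 1 / K := by positivity
    have hi1 : 1 / K ≤ 1 := by rw [div_le_one hKpos]; exact hK
    constructor
    · have := mul_le_mul_of_nonneg_left w1 hi0.le
      linarith
    · have := mul_le_mul_of_nonneg_left w2 hKpos.le
      linarith
  have e0 : η' 0 = (h 0 : G) := by simp [η']
  have e1 : η' (m + 2) = (h n : G) := by simp [η']
  have ej : η' (j + 1) = g⁻¹ * η j := by simp [η', hj]
  obtain ⟨i, hi, hd⟩ := hst n h hh K (ε + 2 * r + 2 * K) hK (by linarith) (m + 2) η' hq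
    ⟨0, Nat.zero_le _, e0⟩ ⟨n, le_rfl, e1⟩ (j + 1) (by omega)
  refine ⟨i, hi, ?_⟩
  rw [ej, ← bp_left S g, mul_inv_cancel_left] at hd
  exact hd.trans (le_max_right _ _)

end Coarse

section Core

variable {G : Type*} [Group G]

theorem bp_geod_shift {α : Type*} (d : α → α → ℝ) (n : ℕ) (γ : ℕ → α) (hγ : IsGeodesic d n γ)
    (k : ℕ) (hk : k ≤ n) : IsGeodesic d (n - k) (fun l => γ (k + l)) := by
  intro i j hi hj
  show d (γ (k + i)) (γ (k + j)) = _
  rw [hγ (k + i) (k + j) (by omega) (by omega)]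
  push_cast
  congr 1
  ring

theorem bp_geod_rev {α : Type*} (d : α → α → ℝ) (n : ℕ) (γ : ℕ → α) (hγ : IsGeodesic d n γ)
    (k : ℕ) (hk : k ≤ n) : IsGeodesic d k (fun l => γ (k - l)) := by
  intro i j hi hj
  show d (γ (k - i)) (γ (k - j)) = _
  rw [hγ (k - i) (k - j) (by omega) (by omega), Nat.cast_sub hi, Nat.cast_sub hj, abs_sub_comm]
  congr 1
  ring

theorem bp_translate_qg (S : Set G) (H : Subgroup G) (T : Set H) (μ c : ℝ) (hμ : 1 ≤ μ)
    (hqi : ∀ h₁ h₂ : H,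
      (1 / μ) * wordDist T h₁ h₂ - c ≤ wordDist S (h₁ : G) (h₂ : G) ∧
        wordDist S (h₁ : G) (h₂ : G) ≤ μ * wordDist T h₁ h₂ + c)
    (g : G) (n : ℕ) (h : ℕ → H) (hh : IsGeodesic (wordDist T) n h) :
    IsQuasigeodesic (wordDist S) μ c n (fun i => g * (h i : G)) := by
  intro i j hi hj
  have := hqi (h i) (h j)
  rw [hh i j hi hj] at this
  show _ ≤ wordDist S (g * _) (g * _) ∧ wordDist S (g * _) (g * _) ≤ _
  rw [bp_left]
  exact this

theorem bp_core (S : Set G) (hS : Subgroup.closure S = ⊤) (H : Subgroup G) (T : Set H)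
    (hT : Subgroup.closure T = ⊤) (f : ℝ → ℝ → ℝ) (μ c : ℝ) (hμ : 1 ≤ μ) (hc : 0 ≤ c)
    (hqi : ∀ h₁ h₂ : H,
      (1 / μ) * wordDist T h₁ h₂ - c ≤ wordDist S (h₁ : G) (h₂ : G) ∧
        wordDist S (h₁ : G) (h₂ : G) ≤ μ * wordDist T h₁ h₂ + c)
    (hst : ∀ (n : ℕ) (γ : ℕ → H), IsGeodesic (wordDist T) n γ →
      IsStablePath (wordDist S) f n (fun i => (γ i : G)))
    (D : ℝ) (hD : 0 ≤ D) :
    ∃ R : ℝ, ∀ (N : ℕ) (g : Fin (N + 1) → G),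
      (∀ i j, ∃ u v : H, wordDist S (g i * u) (g j * v) ≤ D) →
      ∃ p : G, ∀ j, ∃ u : H, wordDist S p (g j * u) ≤ R := by
  have hμ0 : 0 < μ := by linarith
  have near : ∀ r : ℝ, 0 ≤ r → ∃ R : ℝ, 0 ≤ R ∧ ∀ (w a : G) (n : ℕ) (h : ℕ → H),
      IsGeodesic (wordDist T) n h →
      (∀ l ≤ n, wordDist S w (a * h 0) ≤ wordDist S w (a * h l)) →
      ∀ (b : G) (n' : ℕ) (h' : ℕ → H), IsGeodesic (wordDist T) n' h' →
        wordDist S w (b * h' 0) ≤ r → wordDist S (a * h n) (b * h' n') ≤ r →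
        ∃ i ≤ n', wordDist S (a * h 0) (b * h' i) ≤ R := by
    intro r hr
    obtain ⟨R, hR, hM⟩ := bp_morse S hS H T f hst (3 * μ) c r (by linarith) hc hr
    refine ⟨R, hR, ?_⟩
    intro w a n h hh hmin b n' h' hh' h0 hn
    obtain ⟨m, η, hη, η0, ηm, k, hk, ηk⟩ := bp_concat S hS μ c hμ hc w n (fun i => a * (h i : G))
      (bp_translate_qg S H T μ c hμ hqi a n h hh) hmin
    have := hM b n' h' hh' m η hη (by rw [η0]; exact h0) (by rw [ηm]; exact hn) k hk
    rw [ηk] at this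
    exact this
  obtain ⟨R1, hR1, near1⟩ := near D hD
  obtain ⟨R2, hR2, near2⟩ := near R1 hR1
  obtain ⟨R3, hR3, hM3⟩ := bp_morse S hS H T f hst μ c (max R1 R2) hμ hc
    (le_max_of_le_left hR1)
  set B : ℝ := μ * (2 * R2 + c) with hB
  have hB0 : 0 ≤ B := by positivity
  refine ⟨R2 + R3 + (μ * (2 * B) + c) + R2, ?_⟩
  intro N g hg
  -- the centre of a triangle of cosets
  have centre : ∀ i j, ∃ z zi zj : H, wordDist S (g 0 * z) (g i * zi) ≤ R1 ∧
      wordDist S (g 0 * z) (g j * zj) ≤ R1 := by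
    intro i j
    obtain ⟨xi, yi, hi⟩ := hg 0 i
    obtain ⟨xj, yj, hj⟩ := hg 0 j
    obtain ⟨u, v, huv⟩ := hg i j
    obtain ⟨n, γ, hγ, γ0, γn, -⟩ := bp_geod T hT xi xj
    obtain ⟨k, hk, hmin⟩ := Finset.exists_min_image (Finset.range (n + 1))
      (fun k => wordDist S (g i * u) (g 0 * γ k)) ⟨0, by simp⟩
    have hk' : k ≤ n := by simpa [Nat.lt_succ_iff] using hk
    have hmin' : ∀ l ≤ n, wordDist S (g i * u) (g 0 * γ k) ≤ wordDist S (g i * u) (g 0 * γ l) :=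
      fun l hl => hmin l (by simpa [Nat.lt_succ_iff] using hl)
    obtain ⟨n1, α, hα, α0, αn, -⟩ := bp_geod T hT u yi
    obtain ⟨n2, β, hβ, β0, βn, -⟩ := bp_geod T hT v yj
    obtain ⟨s, -, hs⟩ := near1 (g i * u) (g 0) k (fun l => γ (k - l)) (bp_geod_rev _ n γ hγ k hk')
      (fun l hl => by simpa using hmin' (k - l) (by omega)) (g i) n1 α hα
      (by rw [α0, bp_self]; exact hD) (by rw [αn]; simpa [γ0] using hi)
    obtain ⟨t, -, ht⟩ := near1 (g i * u) (g 0) (n - k) (fun l => γ (k + l))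
      (bp_geod_shift _ n γ hγ k hk')
      (fun l hl => by simpa using hmin' (k + l) (by omega)) (g j) n2 β hβ
      (by rw [β0]; exact huv)
      (by
        have e : k + (n - k) = n := by omega
        rw [βn]; simpa [e, γn] using hj)
    exact ⟨γ k, α s, β t, by simpa using hs, by simpa using ht⟩
  -- nearest points
  choose p hp using fun i => bp_nearest S H (g 0) (g i)
  choose q hq using fun i => bp_nearest S H (g i * p i) (g 0)
  obtain ⟨i, hi⟩ := Finite.exists_max (fun i => wordDist T 1 (q i))
  refine ⟨g i * p i, fun j => ?_⟩
  obtain ⟨z, zi, zj, hzi, hzj⟩ := centre i j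
  obtain ⟨n, γ, hγ, γ0, γn, -⟩ := bp_geod T hT 1 z
  have proj : ∀ (k : Fin (N + 1)) (zk : H), wordDist S (g 0 * z) (g k * zk) ≤ R1 →
      ∃ s ≤ n, wordDist S (g k * p k) (g 0 * γ s) ≤ R2 ∧ |(s : ℝ) - wordDist T 1 (q k)| ≤ B := by
    intro k zk hzk
    obtain ⟨m, α, hα, α0, αm, -⟩ := bp_geod T hT (p k) zk
    obtain ⟨s, hs, hd⟩ := near2 (g 0) (g k) m α hα
      (fun l hl => by rw [α0]; exact hp k (α l)) (g 0) n γ hγ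
      (by rw [γ0]; simpa [bp_self] using hR1)
      (by rw [αm, γn, bp_comm S hS]; exact hzk)
    rw [α0] at hd
    refine ⟨s, hs, hd, ?_⟩
    have d1 := (hq k (γ s)).trans hd
    have d2 := bp_tri S hS (g 0 * q k) (g k * p k) (g 0 * γ s)
    rw [bp_comm S hS (g 0 * q k) (g k * p k), bp_left] at d2
    have d3 := (hqi (q k) (γ s)).1
    have d4 : (1 / μ) * wordDist T (q k) (γ s) ≤ 2 * R2 + c := by linarith
    rw [one_div, inv_mul_le_iff₀ hμ0] at d4
    have d5 : wordDist T 1 (γ s) = s := by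
      rw [← γ0, hγ 0 s (by omega) hs]; simp
    have d6 := bp_tri T hT 1 (q k) (γ s)
    have d7 := bp_tri T hT 1 (γ s) (q k)
    rw [bp_comm T hT (γ s) (q k)] at d7
    rw [abs_le]
    constructor <;> linarith
  obtain ⟨s, hs, hsd, hsB⟩ := proj i zi hzi
  obtain ⟨t, ht, htd, htB⟩ := proj j zj hzj
  have hij : wordDist T 1 (q j) ≤ wordDist T 1 (q i) := hi j
  rw [abs_le] at hsB htB
  have hP : 0 ≤ μ * (2 * B) + c := by positivity
  rcases le_total t s with hts | hts
  · obtain ⟨m, α, hα, α0, αm, -⟩ := bp_geod T hT (p j) zj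
    obtain ⟨l, -, hl⟩ := hM3 (g j) m α hα (n - t) (fun l => g 0 * (γ (t + l) : G))
      (bp_translate_qg S H T μ c hμ hqi (g 0) (n - t) (fun l => γ (t + l))
        (bp_geod_shift _ n γ hγ t ht))
      (by
        rw [α0, bp_comm S hS]
        exact le_trans (by simpa using htd) (le_max_right _ _))
      (by
        have e : t + (n - t) = n := by omega
        rw [αm]
        exact le_trans (by simpa [e, γn] using hzj) (le_max_left _ _))
      (s - t) (by omega)
    have e : t + (s - t) = s := by omega
    simp only [e] at hl
    refine ⟨α l, ?_⟩
    have := bp_tri S hS (g i * p i) (g 0 * γ s) (g j * α l)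
    linarith
  · refine ⟨p j, ?_⟩
    have hts' : (s : ℝ) ≤ t := by exact_mod_cast hts
    have b1 := (hqi (γ s) (γ t)).2
    rw [hγ s t hs ht, abs_sub_comm, abs_of_nonneg (by linarith), ← bp_left S (g 0)] at b1
    have b2 : μ * ((t : ℝ) - s) ≤ μ * (2 * B) :=
      mul_le_mul_of_nonneg_left (by linarith) hμ0.le
    have b3 := bp_tri S hS (g i * p i) (g 0 * γ s) (g j * p j)
    have b4 := bp_tri S hS (g 0 * γ s) (g 0 * γ t) (g j * p j)
    rw [bp_comm S hS (g 0 * γ t) (g j * p j)] at b4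
    linarith

end Core

/-- **Bounded packing for a single stable subgroup.** For every `D ≥ 0` there is `N` such
that among any `N` distinct left cosets of `H` two are at distance at least `D`. -/
theorem bounded_packing_of_stable {G : Type*} [Group G] (S : Set G) (hSfin : S.Finite)
    (hSgen : Subgroup.closure S = ⊤) (H : Subgroup G) (hstable : IsStableSubgroup S H) :
    ∀ D : ℝ, 0 ≤ D → ∃ N : ℕ, ∀ g : Fin N → G,
      (∀ i j : Fin N, i ≠ j → g i • (H : Set G) ≠ g j • (H : Set G)) →
      ∃ i j : Fin N, i ≠ j ∧ D ≤ setDist S (g i • (H : Set G)) (g j • (H : Set G)) := by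
  intro D hD
  obtain ⟨f, T, -, hT, ⟨μ, c, hμ, hc, hqi⟩, hst⟩ := hstable
  obtain ⟨R, hR⟩ := bp_core S hSgen H T hT f μ c hμ hc hqi (fun n γ h => (hst n γ h).2) D hD
  have hfin := bp_ball_finite S hSfin hSgen R
  refine ⟨hfin.toFinset.card + 1, ?_⟩
  intro g hg
  by_contra hcon
  push Not at hcon
  have hclose : ∀ i j, ∃ u v : H, wordDist S (g i * u) (g j * v) ≤ D := by
    intro i j
    by_cases hij : i = j
    · subst hij
      exact ⟨1, 1, by rw [bp_self]; exact hD⟩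
    · obtain ⟨r, ⟨a, ha, b, hb, rfl⟩, hlt⟩ := exists_lt_of_csInf_lt
        (s := {r : ℝ | ∃ a ∈ g i • (H : Set G), ∃ b ∈ g j • (H : Set G), r = wordDist S a b})
        ⟨_, g i • 1, Set.smul_mem_smul_set H.one_mem, g j • 1,
          Set.smul_mem_smul_set H.one_mem, rfl⟩ (hcon i j hij)
      obtain ⟨u, hu, rfl⟩ := ha
      obtain ⟨v, hv, rfl⟩ := hb
      exact ⟨⟨u, hu⟩, ⟨v, hv⟩, hlt.le⟩
  obtain ⟨p, hp⟩ := hR _ g hclose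
  choose u hu using hp
  have hinj : Function.Injective (fun j => p⁻¹ * (g j * (u j : G))) := by
    intro i j hij
    by_contra hne
    apply hg i j hne
    have h1 : g i * (u i : G) = g j * (u j : G) := mul_left_cancel hij
    rw [leftCoset_eq_iff]
    have h2 : (g i)⁻¹ * g j = (u i : G) * (u j : G)⁻¹ := by
      rw [inv_mul_eq_iff_eq_mul, ← mul_assoc, h1, mul_inv_cancel_right]
    rw [h2]
    exact H.mul_mem (u i).2 (H.inv_mem (u j).2)
  have hcard := Finset.card_le_card_of_injOn (s := Finset.univ) (t := hfin.toFinset)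
    (fun j => p⁻¹ * (g j * (u j : G))) (by
      intro j _
      simp only [Set.Finite.coe_toFinset, Set.mem_setOf_eq]
      rw [← bp_left S p]
      simpa using hu j) hinj.injOn
  rw [Finset.card_univ, Fintype.card_fin] at hcard
  omega
end

section
/- Let G be a group generated by a finite set S and let 𝓗 = {H_1,…,H_l} be a finite collection of stable subgroups of G. Then 𝓗 has finite width: there exists n ∈ ℕ such that every collection of pairwise distinct cosets g_1H_{σ(1)},…,g_kH_{σ(k)} (H_{σ(i)} ∈ 𝓗) with H_{σ(i)}^{g_i} ∩ H_{σ(j)}^{g_j} infinite for all i ≠ j satisfies k ≤ n. -/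
open Pointwise

/-! ### Abstract part -/

structure DLike {X : Type*} (d : X → X → ℝ) : Prop where
  self : ∀ x, d x x = 0
  nonneg : ∀ x y, 0 ≤ d x y
  symm : ∀ x y, d x y = d y x
  tri : ∀ x y z, d x z ≤ d x y + d y z
  geod : ∀ x y, ∃ (m : ℕ) (α : ℕ → X), α 0 = x ∧ α m = y ∧ 
    ∀ i j : ℕ, i ≤ j → j ≤ m → d (α i) (α j) = (j : ℝ) - i
  proj : ∀ (A : Set X) (p : X), A.Nonempty → ∃ q ∈ A, ∀ a ∈ A, d p q ≤ d p a

def QG {X : Type*} (d : X → X → ℝ) (K ε : ℝ) (n : ℕ) (η : ℕ → X) : Prop :=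
  ∀ i j : ℕ, i ≤ j → j ≤ n →
    (j : ℝ) - i ≤ K * d (η i) (η j) + ε ∧ d (η i) (η j) ≤ K * ((j : ℝ) - i) + ε

def Stab {X : Type*} (d : X → X → ℝ) (F : ℝ → ℝ → ℝ) (n : ℕ) (γ : ℕ → X) : Prop :=
  ∀ K ε : ℝ, 1 ≤ K → 0 ≤ ε → ∀ (m : ℕ) (η : ℕ → X), QG d K ε m η →
    (∃ i ≤ n, η 0 = γ i) → (∃ i ≤ n, η m = γ i) →
    ∀ j ≤ m, ∃ i ≤ n, d (η j) (γ i) ≤ F K ε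

def Good {X : Type*} (d : X → X → ℝ) (K₀ ε₀ : ℝ) (F : ℝ → ℝ → ℝ) (A : Set X) : Prop :=
  ∃ dT : X → X → ℝ, (∀ a ∈ A, ∀ b ∈ A, ∀ c ∈ A, dT a c ≤ dT a b + dT b c) ∧
    ∀ a ∈ A, ∀ b ∈ A, ∃ (n : ℕ) (γ : ℕ → X), γ 0 = a ∧ γ n = b ∧ (∀ i ≤ n, γ i ∈ A) ∧
      (∀ i ≤ n, dT a (γ i) = i) ∧ QG d K₀ ε₀ n γ ∧ Stab d F n γ

section Abs
variable {X : Type*} {d : X → X → ℝ}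

lemma QG.mono {K ε K' ε' : ℝ} {n : ℕ} {η : ℕ → X} (hd : DLike d) (h : QG d K ε n η)
    (hK : K ≤ K') (hε : ε ≤ ε') : QG d K' ε' n η := by
  intro i j hij hj
  have h1 := h i j hij hj
  have h2 := hd.nonneg (η i) (η j)
  have h3 : (0 : ℝ) ≤ (j : ℝ) - i := sub_nonneg.2 (by exact_mod_cast hij)
  have h4 := mul_le_mul_of_nonneg_right hK h2
  have h5 := mul_le_mul_of_nonneg_right hK h3
  constructor <;> linarith

lemma QG.concat {K ε : ℝ} {m n : ℕ} {α γ : ℕ → X} (hd : DLike d)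
    (hα : QG d K ε m α) (hγ : QG d K ε n γ) (hε : 0 ≤ ε) (heq : α m = γ 0)
    (cross : ∀ i ≤ m, ∀ j ≤ n, ((m : ℝ) - i) + j ≤ K * d (α i) (γ j) + ε) :
    QG d K (2 * ε) (m + n) (fun i => if i ≤ m then α i else γ (i - m)) := by
  intro i j hij hj
  by_cases hi : i ≤ m
  · by_cases hjm : j ≤ m
    · simp only [hi, hjm, if_true]
      have := hα i j hij hjm
      constructor <;> linarith
    · simp only [hi, hjm, if_true, if_false]
      have hjn : j - m ≤ n := by omega
      have hc : ((j - m : ℕ) : ℝ) = (j : ℝ) - m := by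
        rw [Nat.cast_sub (by omega)]
      have h1 := cross i hi (j - m) hjn
      have h2 := (hα i m hi le_rfl).2
      have h3 := (hγ 0 (j - m) (by omega) hjn).2
      have h4 := hd.tri (α i) (α m) (γ (j - m))
      rw [hc] at h1 h3
      rw [heq] at h2 h4
      push_cast at h3
      constructor
      · linarith
      · nlinarith
  · have hjm : ¬ j ≤ m := by omega
    simp only [hi, hjm, if_false]
    have := hγ (i - m) (j - m) (by omega) (by omega)
    rw [Nat.cast_sub (by omega), Nat.cast_sub (by omega)] at this
    have e : (j : ℝ) - m - (i - m) = j - i := by ring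
    rw [e] at this
    constructor <;> linarith

lemma threePath (hd : DLike d) {K₀ ε₀ : ℝ} (hK : 1 ≤ K₀) (hε : 0 ≤ ε₀) {A : Set X}
    {p q u v : X} {n : ℕ} {γ : ℕ → X} (hγ : QG d K₀ ε₀ n γ) (hγA : ∀ i ≤ n, γ i ∈ A)
    (h0 : γ 0 = q) (hn : γ n = v) (hq : ∀ a ∈ A, d p q ≤ d p a) (hv : ∀ a ∈ A, d u v ≤ d u a)
    (hc : d u v = 0 ∨ 2 * (d p q + d u v) ≤ d q v) :
    ∃ (M : ℕ) (η : ℕ → X) (a : ℕ), QG d (1 + 2 * K₀) (4 * ε₀) M η ∧ η 0 = p ∧ η M = u ∧ 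
      a ≤ M ∧ η a = q := by
  obtain ⟨m, α, hα0, hαm, hα⟩ := hd.geod p q
  obtain ⟨m', β, hβ0, hβm, hβ⟩ := hd.geod v u
  have hαq : QG d (1 + 2 * K₀) ε₀ m α := by
    intro i j hij hj
    rw [hα i j hij hj]
    have h3 : (0 : ℝ) ≤ (j : ℝ) - i := sub_nonneg.2 (by exact_mod_cast hij)
    constructor <;> nlinarith
  have hβq : QG d (1 + 2 * K₀) (2 * ε₀) m' β := by
    intro i j hij hj
    rw [hβ i j hij hj]
    have h3 : (0 : ℝ) ≤ (j : ℝ) - i := sub_nonneg.2 (by exact_mod_cast hij)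
    constructor <;> nlinarith
  have hγq : QG d (1 + 2 * K₀) ε₀ n γ := hγ.mono hd (by linarith) le_rfl
  have hpq : d p q = m := by
    have := hα 0 m (by omega) le_rfl
    rw [hα0, hαm] at this; simpa using this
  have huv : d u v = m' := by
    have := hβ 0 m' (by omega) le_rfl
    rw [hβ0, hβm] at this; rw [hd.symm]; simpa using this
  -- cross condition between `α` and `γ`
  have c1 : ∀ i ≤ m, ∀ j ≤ n, ((m : ℝ) - i) + j ≤ (1 + 2 * K₀) * d (α i) (γ j) + ε₀ := by
    intro i hi j hj
    have e1 : d (α i) q = m - i := by rw [← hαm]; exact hα i m hi le_rfl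
    have e2 : d p (α i) = i := by
      rw [← hα0]; have := hα 0 i (by omega) hi; simpa using this
    have e3 := hq (γ j) (hγA j hj)
    have e4 := hd.tri p (α i) (γ j)
    have e5 := (hγ 0 j (by omega) hj).1
    have e6 := hd.tri (γ 0) (α i) (γ j)
    rw [h0] at e5 e6
    rw [hd.symm q (α i)] at e6
    push_cast at e5
    have e7 : d q (γ j) ≤ 2 * d (α i) (γ j) := by linarith
    have e8 := mul_le_mul_of_nonneg_left e7 (by linarith : (0 : ℝ) ≤ K₀)
    linarith
  have Q1 := hαq.concat hd hγq hε (by rw [hαm, h0]) c1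
  set η₁ : ℕ → X := fun i => if i ≤ m then α i else γ (i - m) with hη₁
  have hη₁0 : η₁ 0 = p := by simp [hη₁, hα0]
  have hη₁m : η₁ m = q := by simp [hη₁, hαm]
  have hη₁n : η₁ (m + n) = v := by
    by_cases hn0 : n = 0
    · subst hn0; simp [hη₁, hαm, ← h0, hn]
    · have : ¬ (m + n ≤ m) := by omega
      simp [hη₁, hn, hn0]
  have c2 : ∀ i ≤ m + n, ∀ j ≤ m', (((m + n : ℕ) : ℝ) - i) + j ≤ 
      (1 + 2 * K₀) * d (η₁ i) (β j) + 2 * ε₀ := by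
    intro i hi j hj
    have f1 : d v (β j) = j := by
      rw [← hβ0]; have := hβ 0 j (by omega) hj; simpa using this
    have f2 : d (β j) u = m' - j := by rw [← hβm]; exact hβ j m' hj le_rfl
    by_cases him : i ≤ m
    · have hi' : η₁ i = α i := by simp [hη₁, him]
      rcases hc with hc | hc
      · have hm' : m' = 0 := by rw [huv] at hc; exact_mod_cast hc
        subst hm'
        have hj0 : j = 0 := by omega
        subst hj0
        have := (Q1 i (m + n) hi le_rfl).1
        rw [hη₁n] at this
        rw [hβ0]
        simpa using this
      · rw [hi']
        have e1 : d (α i) q = m - i := by rw [← hαm]; exact hα i m him le_rfl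
        have e2 := hd.tri q (α i) v
        have e3 := hd.tri (α i) (β j) v
        rw [hd.symm q (α i)] at e2
        rw [hd.symm (β j) v] at e3
        have e5 := (hγ 0 n (by omega) le_rfl).1
        rw [h0, hn] at e5
        have i0 : (0 : ℝ) ≤ i := by positivity
        have jm : (j : ℝ) ≤ m' := by exact_mod_cast hj
        push_cast at e5 ⊢
        have g1 : d q v ≤ 2 * d (α i) (β j) := by linarith
        have g2 := mul_le_mul_of_nonneg_left g1 (by linarith : (0 : ℝ) ≤ K₀)
        linarith
    · have hi' : η₁ i = γ (i - m) := by simp [hη₁, him]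
      rw [hi']
      have him' : i - m ≤ n := by omega
      have e3 := hv (γ (i - m)) (hγA _ him')
      have e4 := hd.tri u (β j) (γ (i - m))
      have e5 := (hγ (i - m) n him' le_rfl).1
      have e6 := hd.tri (γ (i - m)) (β j) v
      rw [hd.symm (β j) v] at e6
      rw [hd.symm u (β j), hd.symm (β j) (γ _)] at e4
      rw [hn, Nat.cast_sub (by omega)] at e5
      have e7 : d (γ (i - m)) v ≤ 2 * d (γ (i - m)) (β j) := by linarith
      have e8 := mul_le_mul_of_nonneg_left e7 (by linarith : (0 : ℝ) ≤ K₀)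
      push_cast
      linarith
  have Q2 := Q1.concat hd hβq (by linarith) (by rw [hη₁n, hβ0]) c2
  refine ⟨m + n + m', fun i => if i ≤ m + n then η₁ i else β (i - (m + n)), m, ?_, ?_, ?_,
    by omega, ?_⟩
  · exact Q2.mono hd le_rfl (by linarith)
  · simp [hη₁0]
  · by_cases hm0 : m' = 0
    · subst hm0; simp [hη₁n, ← hβ0, hβm]
    · simp [hβm, hm0]
  · simp [hη₁m]

lemma track (hd : DLike d) {F : ℝ → ℝ → ℝ} {N : ℕ} {γ : ℕ → X}
    (hs : Stab d F N γ) {K ε D : ℝ} (hK : 1 ≤ K) (hε : 0 ≤ ε) (hD : 0 ≤ D) {M : ℕ} {η : ℕ → X}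
    (hη : QG d K ε M η) (i0 i1 : ℕ) (hi0 : i0 ≤ N) (hi1 : i1 ≤ N)
    (h0 : d (η 0) (γ i0) ≤ D) (h1 : d (η M) (γ i1) ≤ D) :
    ∀ j ≤ M, ∃ i ≤ N, d (η j) (γ i) ≤ D + F K (ε + 2 * K * D) := by
  set η' : ℕ → X := fun i => if i = 0 then γ i0 else if i = M then γ i1 else η i with hη'
  have hclose : ∀ i, d (η i) (η' i) ≤ D := by
    intro i
    simp only [hη']
    split_ifs with a b
    · rw [a]; exact h0
    · rw [b]; exact h1
    · rw [hd.self]; exact hD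
  have hQ : QG d K (ε + 2 * K * D) M η' := by
    intro i j hij hj
    have a := hη i j hij hj
    have b1 := hclose i
    have b2 := hclose j
    have t1 := hd.tri (η i) (η' i) (η j)
    have t2 := hd.tri (η' i) (η' j) (η j)
    have t3 := hd.tri (η' i) (η i) (η' j)
    have t4 := hd.tri (η i) (η j) (η' j)
    rw [hd.symm (η' i) (η i)] at t3
    rw [hd.symm (η' j) (η j)] at t2
    have g1 : d (η i) (η j) ≤ d (η' i) (η' j) + 2 * D := by linarith
    have g2 := mul_le_mul_of_nonneg_left g1 (by linarith : (0 : ℝ) ≤ K)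
    have g3 : D ≤ K * D := by nlinarith
    constructor
    · linarith
    · linarith
  intro j hj
  obtain ⟨i, hi, hh⟩ := hs K (ε + 2 * K * D) hK (by positivity) M η' hQ
    ⟨i0, hi0, by simp [hη']⟩ (by
      by_cases hM : M = 0
      · exact ⟨i0, hi0, by simp [hη', hM]⟩
      · exact ⟨i1, hi1, by simp [hη', hM]⟩) j hj
  refine ⟨i, hi, ?_⟩
  have := hd.tri (η j) (η' j) (γ i)
  have := hclose j
  linarith

/-- `A i` and `A j` come `R`-close arbitrarily far away. -/
def FarContact (d : X → X → ℝ) (A B : Set X) : Prop :=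
  ∃ R : ℝ, ∀ (N : ℝ) (q : X), ∃ u ∈ A, ∃ v ∈ B, d u v ≤ R ∧ N ≤ d q v

lemma projNear (hd : DLike d) {K₀ ε₀ : ℝ} {F : ℝ → ℝ → ℝ} (hK : 1 ≤ K₀) (hε : 0 ≤ ε₀)
    (hF : ∀ K ε, 0 ≤ F K ε) {D : ℝ} (hD : 0 ≤ D) {A B : Set X}
    (hA : Good d K₀ ε₀ F A) (hB : Good d K₀ ε₀ F B) (hAB : A = B ∨ FarContact d B A)
    {p q : X} (hp : ∃ b ∈ B, d p b ≤ D) (hqA : q ∈ A) (hq : ∀ a ∈ A, d p q ≤ d p a) :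
    ∃ b ∈ B, d q b ≤ D + F (1 + 2 * K₀) (4 * ε₀ + 2 * (1 + 2 * K₀) * D) := by
  rcases hAB with rfl | ⟨R, hR⟩
  · have := hF (1 + 2 * K₀) (4 * ε₀ + 2 * (1 + 2 * K₀) * D)
    exact ⟨q, hqA, by rw [hd.self]; linarith⟩
  · obtain ⟨p', hp'B, hp'⟩ := hp
    obtain ⟨u, huB, v₀, hv₀A, huv₀, hfar⟩ := hR (2 * (d p q + R) + 2 * R) q
    obtain ⟨v, hvA, hv⟩ := hd.proj A u ⟨v₀, hv₀A⟩
    have huv := hv v₀ hv₀A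
    have t1 := hd.tri q v v₀
    have t2 := hd.tri v u v₀
    rw [hd.symm v u] at t2
    obtain ⟨_, _, hAp⟩ := hA
    obtain ⟨n, γ, h0, hn, hγA, -, hγ, -⟩ := hAp q hqA v hvA
    obtain ⟨M, η, a, hη, hη0, hηM, ha, hηa⟩ := threePath hd hK hε hγ hγA h0 hn hq hv
      (Or.inr (by linarith))
    obtain ⟨_, _, hBp⟩ := hB
    obtain ⟨n', γ', h0', hn', hγB, -, -, hst⟩ := hBp p' hp'B u huB
    obtain ⟨i, hi, hh⟩ := track hd hst (by linarith) (by positivity) hD hη 0 n' (by omega) le_rfl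
      (by rw [hη0, h0']; exact hp') (by rw [hηM, hn', hd.self]; exact hD) a ha
    exact ⟨γ' i, hγB i hi, by rw [hηa] at hh; exact hh⟩

theorem helly (hd : DLike d) {K₀ ε₀ : ℝ} {F : ℝ → ℝ → ℝ} (hK : 1 ≤ K₀) (hε : 0 ≤ ε₀)
    (hF : ∀ K ε, 0 ≤ F K ε) : ∃ C : ℝ, ∀ (k : ℕ) (A : Fin (k + 1) → Set X),
      (∀ i, Good d K₀ ε₀ F (A i)) → (∀ i, (A i).Nonempty) →
      (∀ i j, i ≠ j → FarContact d (A i) (A j)) → ∃ y : X, ∀ i, ∃ a ∈ A i, d y a ≤ C := by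
  -- constants
  let P : ℝ → ℝ := fun D => D + F (1 + 2 * K₀) (4 * ε₀ + 2 * (1 + 2 * K₀) * D)
  have hP : ∀ D, 0 ≤ D → D ≤ P D := fun D hD => by
    have := hF (1 + 2 * K₀) (4 * ε₀ + 2 * (1 + 2 * K₀) * D)
    simp only [P]; linarith
  obtain ⟨D1, hD1⟩ : ∃ D1, D1 = P 0 := ⟨_, rfl⟩
  obtain ⟨D2, hD2⟩ : ∃ D2, D2 = P D1 := ⟨_, rfl⟩
  have hD1' : 0 ≤ D1 := hD1 ▸ hP 0 le_rfl
  have hD2' : D1 ≤ D2 := hD2 ▸ hP D1 hD1'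
  obtain ⟨D3, hD3⟩ : ∃ D3, D3 = P (2 * D2) := ⟨_, rfl⟩
  have hD3' : 2 * D2 ≤ D3 := hD3 ▸ hP _ (by linarith)
  obtain ⟨E, hE⟩ : ∃ E, E = K₀ * (D3 + D1) + ε₀ := ⟨_, rfl⟩
  obtain ⟨Q, hQ⟩ : ∃ Q, Q = D3 + F K₀ (ε₀ + 2 * K₀ * D3) := ⟨_, rfl⟩
  have hQ0 : 0 ≤ Q := by have := hF K₀ (ε₀ + 2 * K₀ * D3); linarith
  have hE0 : 0 ≤ E := by 
    have : 0 ≤ K₀ * (D3 + D1) := mul_nonneg (by linarith) (by linarith)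
    linarith
  refine ⟨2 * D3 + Q + K₀ * (2 * E) + ε₀, ?_⟩
  intro k A hgood hne hfar
  obtain ⟨b, hb⟩ := hne 0
  have hpn : ∀ i j (D : ℝ), 0 ≤ D → ∀ p q, (∃ b ∈ A j, d p b ≤ D) → q ∈ A i → 
      (∀ a ∈ A i, d p q ≤ d p a) → ∃ b ∈ A j, d q b ≤ P D := by
    intro i j D hD p q hp hqA hq
    refine projNear hd hK hε hF hD (hgood i) (hgood j) ?_ hp hqA hq
    by_cases hij : i = j
    · left; rw [hij]
    · right; exact hfar j i (Ne.symm hij)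
  choose y hyA hy using fun i => hd.proj (A i) b (hne i)
  have h1 : ∀ i, ∃ x ∈ A 0, d (y i) x ≤ D1 := fun i =>
    hD1 ▸ hpn i 0 0 le_rfl b (y i) ⟨b, hb, by rw [hd.self]⟩ (hyA i) (hy i)
  choose π hπA hπ using h1
  obtain ⟨dT, htri, hpath⟩ := hgood 0
  obtain ⟨j, hj⟩ := Finite.exists_max (fun i => dT b (π i))
  refine ⟨y j, fun i => ?_⟩
  -- project `y i` to `A j`
  obtain ⟨z, hzj, hz⟩ := hd.proj (A j) (y i) (hne j)
  obtain ⟨z', hz'i, hzz'⟩ := hpn j i D1 hD1' (y i) z ⟨y i, hyA i, by rw [hd.self]; exact hD1'⟩ hzj hz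
  obtain ⟨w, hw0, hzw⟩ := hpn j 0 D1 hD1' (y i) z ⟨π i, hπA i, hπ i⟩ hzj hz
  rw [← hD2] at hzz' hzw
  have hz'w : d z' w ≤ 2 * D2 := by
    have := hd.tri z' z w
    rw [hd.symm z' z] at this; linarith
  obtain ⟨n, γ, hγ0, hγn, hγA, hγT, hγQ, hγS⟩ := hpath b hb w hw0
  -- tracking
  have htr : ∀ (i : Fin (k + 1)) (x : X), x ∈ A i → d x w ≤ 2 * D2 →
      ∃ t ≤ n, d (y i) (γ t) ≤ D3 := by
    intro i x hx hxw
    obtain ⟨_, _, hAp⟩ := hgood i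
    obtain ⟨n', γ', h0, hn, hγ'A, -, hγ', -⟩ := hAp (y i) (hyA i) x hx
    obtain ⟨M, η, a, hη, hη0, hηM, ha, hηa⟩ := threePath hd hK hε hγ' hγ'A h0 hn (hy i) 
      (u := x) (fun a _ => by rw [hd.self]; exact hd.nonneg _ _) (Or.inl (hd.self x))
    obtain ⟨t, ht, hh⟩ := track hd hγS (by linarith) (by positivity) 
      (by linarith : (0 : ℝ) ≤ 2 * D2) hη 0 n (by omega) le_rfl
      (by rw [hη0, hγ0, hd.self]; linarith) (by rw [hηM, hγn]; exact hxw) a ha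
    rw [hηa] at hh
    exact ⟨t, ht, by rw [hD3]; exact hh⟩
  obtain ⟨ti, hti, hyi⟩ := htr i z' hz'i hz'w
  obtain ⟨tj, htj, hyj⟩ := htr j z hzj (by linarith)
  -- comparison of `dT` and `d`
  have hTd : ∀ a ∈ A 0, ∀ c ∈ A 0, dT a c ≤ K₀ * d a c + ε₀ := by
    intro a ha c hc
    obtain ⟨n, γ, h0, hn, -, hT, hQ', -⟩ := hpath a ha c hc
    have e1 := hT n le_rfl
    have e2 := (hQ' 0 n (by omega) le_rfl).1
    rw [hn] at e1
    rw [h0, hn] at e2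
    rw [e1]; simpa using e2
  have hcmp : (ti : ℝ) ≤ tj + 2 * E := by
    have a1 := htri b hb (π i) (hπA i) (γ ti) (hγA ti hti)
    have a2 := htri b hb (γ tj) (hγA tj htj) (π j) (hπA j)
    rw [hγT ti hti] at a1
    rw [hγT tj htj] at a2
    have a3 := hTd _ (hπA i) _ (hγA ti hti)
    have a4 := hTd _ (hγA tj htj) _ (hπA j)
    have a5 := hj i
    have b1 := hd.tri (π i) (y i) (γ ti)
    have b2 := hd.tri (γ tj) (y j) (π j)
    rw [hd.symm (π i) (y i)] at b1
    rw [hd.symm (γ tj) (y j)] at b2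
    have b3 := hπ i
    have b4 := hπ j
    have c1 : d (π i) (γ ti) ≤ D3 + D1 := by linarith
    have c2 : d (γ tj) (π j) ≤ D3 + D1 := by linarith
    have c3 := mul_le_mul_of_nonneg_left c1 (by linarith : (0 : ℝ) ≤ K₀)
    have c4 := mul_le_mul_of_nonneg_left c2 (by linarith : (0 : ℝ) ≤ K₀)

    linarith
  rcases le_total ti tj with hle | hle
  · -- `γ tj` lies between `γ ti` and `w`
    obtain ⟨_, _, hAp⟩ := hgood i
    obtain ⟨n', γ', h0, hn, hγ'A, -, -, hst⟩ := hAp (y i) (hyA i) z' hz'i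
    have hsub : QG d K₀ ε₀ (n - ti) (fun s => γ (s + ti)) := by
      intro s t hst ht
      have := hγQ (s + ti) (t + ti) (by omega) (by omega)
      push_cast at this
      have e : (t : ℝ) + ti - (s + ti) = t - s := by ring
      rw [e] at this
      exact this
    obtain ⟨t, ht, hh⟩ := track hd hst hK hε (by linarith : (0 : ℝ) ≤ D3) hsub 0 n' (by omega)
      le_rfl (by simp only [Nat.zero_add]; rw [h0, hd.symm]; exact hyi)
      (by
        rw [Nat.sub_add_cancel hti, hγn, hn, hd.symm]; linarith) (tj - ti) (by omega)
    rw [Nat.sub_add_cancel hle, ← hQ] at hh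
    refine ⟨γ' t, hγ'A t ht, ?_⟩
    have := hd.tri (y j) (γ tj) (γ' t)
    have : 0 ≤ K₀ * (2 * E) := by positivity
    linarith
  · refine ⟨y i, hyA i, ?_⟩
    have a1 := (hγQ tj ti hle hti).2
    have a2 : K₀ * ((ti : ℝ) - tj) ≤ K₀ * (2 * E) :=
      mul_le_mul_of_nonneg_left (by linarith) (by linarith)
    have a3 := hd.tri (y j) (γ tj) (y i)
    have a4 := hd.tri (γ tj) (γ ti) (y i)
    rw [hd.symm (γ ti) (y i)] at a4
    linarith

end Abs

/-! ### Word metrics -/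

section Word
variable {G : Type*} [Group G] {S : Set G}

lemma wl_exists (hS : Subgroup.closure S = ⊤) (g : G) :
    ∃ l : List G, l.length = wordLength S g ∧ (∀ x ∈ l, x ∈ S ∨ x⁻¹ ∈ S) ∧ l.prod = g := by
  have hne : {n : ℕ | ∃ l : List G, l.length = n ∧ (∀ x ∈ l, x ∈ S ∨ x⁻¹ ∈ S) ∧
      l.prod = g}.Nonempty := by
    have hg : g ∈ Subgroup.closure S := by rw [hS]; trivial
    rw [← Subgroup.mem_toSubmonoid, Subgroup.closure_toSubmonoid] at hg
    obtain ⟨l, hl, hp⟩ := Submonoid.exists_list_of_mem_closure hg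
    exact ⟨l.length, l, rfl, fun x hx => by simpa using hl x hx, hp⟩
  exact Nat.sInf_mem hne

lemma wl_le (l : List G) (hl : ∀ x ∈ l, x ∈ S ∨ x⁻¹ ∈ S) : wordLength S l.prod ≤ l.length :=
  Nat.sInf_le ⟨l, rfl, hl, rfl⟩

lemma wl_one : wordLength S (1 : G) = 0 := by
  have := wl_le (S := S) ([] : List G) (by simp)
  simpa using this

lemma wl_mul (hS : Subgroup.closure S = ⊤) (g h : G) :
    wordLength S (g * h) ≤ wordLength S g + wordLength S h := by
  obtain ⟨l1, a1, b1, c1⟩ := wl_exists hS g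
  obtain ⟨l2, a2, b2, c2⟩ := wl_exists hS h
  have := wl_le (S := S) (l1 ++ l2) (by
    intro x hx
    rcases List.mem_append.1 hx with h | h
    · exact b1 x h
    · exact b2 x h)
  rwa [List.prod_append, c1, c2, List.length_append, a1, a2] at this

lemma wl_inv_le (hS : Subgroup.closure S = ⊤) (g : G) :
    wordLength S g⁻¹ ≤ wordLength S g := by
  obtain ⟨l1, a1, b1, c1⟩ := wl_exists hS g
  have := wl_le (S := S) (l1.map (fun x => x⁻¹)).reverse (by
    intro x hx
    simp only [List.mem_reverse, List.mem_map] at hx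
    obtain ⟨y, hy, rfl⟩ := hx
    rcases b1 y hy with h | h
    · right; simpa using h
    · left; exact h)
  rwa [← List.prod_inv_reverse, c1, List.length_reverse, List.length_map, a1] at this

lemma wl_inv (hS : Subgroup.closure S = ⊤) (g : G) :
    wordLength S g⁻¹ = wordLength S g :=
  le_antisymm (wl_inv_le hS g) (by simpa using wl_inv_le hS g⁻¹)

/-- Geodesic words. -/
lemma wl_geod (hS : Subgroup.closure S = ⊤) (g : G) :
    ∃ α : ℕ → G, α 0 = 1 ∧ α (wordLength S g) = g ∧ ∀ i j : ℕ, i ≤ j → j ≤ wordLength S g →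
      wordLength S ((α i)⁻¹ * α j) = j - i := by
  obtain ⟨l, a, b, c⟩ := wl_exists hS g
  have key : ∀ i j : ℕ, i ≤ j → j ≤ wordLength S g →
      wordLength S (((l.take i).prod)⁻¹ * (l.take j).prod) ≤ j - i := by
    intro i j hij hj
    have e : (l.take j).prod = (l.take i).prod * ((l.take j).drop i).prod := by
      rw [← List.prod_append]
      congr 1
      conv_lhs => rw [← List.take_append_drop i (l.take j)]
      rw [List.take_take, min_eq_left hij]
    rw [e, inv_mul_cancel_left]
    have := wl_le (S := S) ((l.take j).drop i) (fun x hx =>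
      b x (List.mem_of_mem_take (List.mem_of_mem_drop hx)))
    rw [List.length_drop, List.length_take] at this
    omega
  have hfull : (l.take (wordLength S g)).prod = g := by rw [← a, List.take_length, c]
  refine ⟨fun i => (l.take i).prod, by simp, hfull, ?_⟩
  intro i j hij hj
  have k1 := key 0 i (by omega) (by omega)
  have k2 := key i j hij hj
  have k3 := key j (wordLength S g) hj le_rfl
  rw [hfull] at k3
  simp only [List.take_zero, List.prod_nil, inv_one, one_mul] at k1
  have t1 := wl_mul hS ((l.take i).prod) (((l.take i).prod)⁻¹ * (l.take j).prod)
  have t2 := wl_mul hS ((l.take j).prod) (((l.take j).prod)⁻¹ * g)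
  rw [mul_inv_cancel_left] at t1 t2
  change wordLength S (((l.take i).prod)⁻¹ * (l.take j).prod) = j - i
  omega

lemma wd_left (a x y : G) : wordDist S (a * x) (a * y) = wordDist S x y := by
  simp [wordDist, mul_assoc]

lemma wd_dlike (hS : Subgroup.closure S = ⊤) : DLike (wordDist S) where
  self x := by simp [wordDist, wl_one]
  nonneg x y := by simp [wordDist]
  symm x y := by
    simp only [wordDist]
    rw [← wl_inv hS]; simp
  tri x y z := by
    have := wl_mul hS (x⁻¹ * y) (y⁻¹ * z)
    rw [mul_assoc, mul_inv_cancel_left] at this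
    simp only [wordDist]
    exact_mod_cast this
  geod x y := by
    obtain ⟨α, h0, hn, h⟩ := wl_geod hS (x⁻¹ * y)
    refine ⟨wordLength S (x⁻¹ * y), fun i => x * α i, by simp [h0], by simp [hn], ?_⟩
    intro i j hij hj
    simp only
    rw [wd_left, wordDist, h i j hij hj, Nat.cast_sub hij]
  proj A p hA := by
    have hne : (Set.image (fun a => wordLength S (p⁻¹ * a)) A).Nonempty := hA.image _
    obtain ⟨q, hq, hh⟩ := Nat.sInf_mem hne
    refine ⟨q, hq, fun a ha => ?_⟩
    simp only [wordDist]
    simp only at hh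
    rw [hh]
    exact_mod_cast Nat.sInf_le (Set.mem_image_of_mem (fun a => wordLength S (p⁻¹ * a)) ha)

lemma wl_ball_finite (hfin : S.Finite) (hS : Subgroup.closure S = ⊤) (n : ℕ) :
    {g : G | wordLength S g ≤ n}.Finite := by
  have hU : (S ∪ S⁻¹ ∪ {1}).Finite := (hfin.union hfin.inv).union (Set.finite_singleton 1)
  have key : ∀ (n : ℕ) (l : List G), (∀ x ∈ l, x ∈ S ∨ x⁻¹ ∈ S) → l.length ≤ n →
      l.prod ∈ (S ∪ S⁻¹ ∪ {1}) ^ n := by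
    intro n
    induction n with
    | zero =>
      intro l _ hlen
      have : l = [] := List.length_eq_zero_iff.1 (by omega)
      subst this; simp
    | succ n ih =>
      intro l hl hlen
      rw [pow_succ']
      cases l with
      | nil =>
        exact ⟨1, by simp, 1, by simpa using ih [] (by simp) (by simp), by simp⟩
      | cons x t =>
        refine ⟨x, ?_, t.prod, ih t (fun y hy => hl y (by simp [hy])) (by simpa using hlen),
          by simp⟩
        rcases hl x (by simp) with h | h
        · simp [h]
        · simp [h]
  have hpow : ((S ∪ S⁻¹ ∪ {1}) ^ n).Finite := by
    clear key
    induction n with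
    | zero => simp
    | succ n ih => rw [pow_succ]; exact ih.mul hU
  refine hpow.subset ?_
  intro g hg
  obtain ⟨l, a, b, c⟩ := wl_exists hS g
  rw [← c]
  exact key n l b (by rw [a]; exact hg)

lemma wd_ball_finite (hfin : S.Finite) (hS : Subgroup.closure S = ⊤) (C : ℝ) :
    {g : G | (wordLength S g : ℝ) ≤ C}.Finite := by
  refine (wl_ball_finite hfin hS ⌊C⌋₊).subset ?_
  intro g hg
  exact Nat.le_floor hg

lemma mem_coset {H : Subgroup G} {g x : G} : x ∈ g • (H : Set G) ↔ g⁻¹ * x ∈ H := by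
  rw [Set.mem_smul_set_iff_inv_smul_mem]; rfl

/-- Stable subgroups have good cosets. -/
lemma good_coset (hS : Subgroup.closure S = ⊤) {H : Subgroup G} (hH : IsStableSubgroup S H) :
    ∃ (K₀ ε₀ : ℝ) (f : ℝ → ℝ → ℝ), 1 ≤ K₀ ∧ 0 ≤ ε₀ ∧ ∀ K₁ ε₁ F, K₀ ≤ K₁ → ε₀ ≤ ε₁ →
      (∀ K ε, f K ε ≤ F K ε) → ∀ g : G, Good (wordDist S) K₁ ε₁ F (g • (H : Set G)) := by
  classical
  obtain ⟨f, T, -, hT, ⟨μ, c, hμ, hc, hqi⟩, hst⟩ := hH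
  have hd := wd_dlike hS
  refine ⟨μ, μ * c, f, hμ, by positivity, ?_⟩
  intro K₁ ε₁ F hK hε hF g
  have hdif : ∀ {a b : G}, a ∈ g • (H : Set G) → b ∈ g • (H : Set G) → a⁻¹ * b ∈ H := by
    intro a b ha hb
    rw [mem_coset] at ha hb
    have := H.mul_mem (H.inv_mem ha) hb
    simpa [mul_assoc] using this
  refine ⟨fun a b => if h : a⁻¹ * b ∈ H then (wordLength T ⟨a⁻¹ * b, h⟩ : ℝ) else 0, ?_, ?_⟩
  · intro a ha b hb e he
    simp only [hdif ha hb, hdif hb he, hdif ha he, dif_pos]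
    have := wl_mul hT ⟨a⁻¹ * b, hdif ha hb⟩ ⟨b⁻¹ * e, hdif hb he⟩
    have e1 : (⟨a⁻¹ * b, hdif ha hb⟩ * ⟨b⁻¹ * e, hdif hb he⟩ : H) = ⟨a⁻¹ * e, hdif ha he⟩ := by
      ext; simp [mul_assoc]
    rw [e1] at this
    exact_mod_cast this
  · intro a ha b hb
    obtain ⟨α, h0, hn, hα⟩ := wl_geod hT ⟨a⁻¹ * b, hdif ha hb⟩
    set n := wordLength T ⟨a⁻¹ * b, hdif ha hb⟩ with hndef
    have hgeo : IsGeodesic (wordDist T) n α := by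
      intro i j hi hj
      rcases le_total i j with h | h
      · rw [wordDist, hα i j h hj, Nat.cast_sub h, abs_sub_comm, abs_of_nonneg]
        exact sub_nonneg.2 (by exact_mod_cast h)
      · rw [(wd_dlike hT).symm, wordDist, hα j i h hi, Nat.cast_sub h, abs_of_nonneg]
        exact sub_nonneg.2 (by exact_mod_cast h)
    refine ⟨n, fun i => a * α i, by simp [h0], by simp [hn], ?_, ?_, ?_, ?_⟩
    · intro i _
      rw [mem_coset] at ha ⊢
      rw [← mul_assoc]
      exact H.mul_mem ha (α i).2
    · intro i hi
      have e1 : a⁻¹ * (a * (α i : G)) = α i := by simp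
      have e2 : a⁻¹ * (a * (α i : G)) ∈ H := by rw [e1]; exact (α i).2
      have e3 : (⟨a⁻¹ * (a * (α i : G)), e2⟩ : H) = (α 0)⁻¹ * α i := by
        rw [h0]; ext; simp
      simp only [e2, dif_pos]
      rw [e3, hα 0 i (by omega) hi]; simp
    · have hq : QG (wordDist S) μ (μ * c) n (fun i => a * (α i : G)) := by
        intro i j hij hj
        simp only
        rw [wd_left]
        have h1 := hqi (α i) (α j)
        have h2 : wordDist T (α i) (α j) = (j : ℝ) - i := by
          rw [wordDist, hα i j hij hj, Nat.cast_sub hij]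
        rw [h2] at h1
        have hμ0 : μ ≠ 0 := by linarith
        constructor
        · have h3 := mul_le_mul_of_nonneg_left h1.1 (by linarith : (0 : ℝ) ≤ μ)
          have h4 : μ * (1 / μ * ((j : ℝ) - i) - c) = (j - i) - μ * c := by
            field_simp
          linarith
        · have : c ≤ μ * c := by nlinarith
          linarith [h1.2]
      exact hq.mono hd hK hε
    · intro K ε hK1 hε0 m η hη ⟨i0, hi0, hη0⟩ ⟨i1, hi1, hη1⟩ j hj
      have hQ : IsQuasigeodesic (wordDist S) K ε m (fun i => a⁻¹ * η i) := by
        have main : ∀ i j : ℕ, i ≤ j → j ≤ m →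
            (1 / K) * ((j : ℝ) - i) - ε ≤ wordDist S (η i) (η j) ∧
            wordDist S (η i) (η j) ≤ K * ((j : ℝ) - i) + ε := by
          intro i j hij hj
          have h1 := hη i j hij hj
          refine ⟨?_, h1.2⟩
          have hK0 : 0 < K := by linarith
          rw [one_div, inv_mul_eq_div, sub_le_iff_le_add, div_le_iff₀ hK0]
          have : ε ≤ K * ε := by nlinarith
          linarith [h1.1]
        intro i j hi hj
        simp only
        rw [wd_left]
        rcases le_total i j with h | h
        · rw [abs_sub_comm, abs_of_nonneg (sub_nonneg.2 (by exact_mod_cast h))]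
          exact main i j h hj
        · rw [hd.symm, abs_of_nonneg (sub_nonneg.2 (by exact_mod_cast h))]
          exact main j i h hi
      obtain ⟨i, hi, hh⟩ := (hst n α hgeo).2 K ε hK1 hε0 m _ hQ
        ⟨i0, hi0, by simp [hη0]⟩ ⟨i1, hi1, by simp [hη1]⟩ j hj
      refine ⟨i, hi, ?_⟩
      simp only at hh
      rw [← wd_left a, mul_inv_cancel_left] at hh
      exact hh.trans (hF K ε)

lemma farContact_of_infinite (hfin : S.Finite) (hS : Subgroup.closure S = ⊤)
    {H₁ H₂ : Subgroup G} {g₁ g₂ : G}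
    (h : ((conjSub g₁ H₁ : Set G) ∩ (conjSub g₂ H₂ : Set G)).Infinite) :
    FarContact (wordDist S) (g₁ • (H₁ : Set G)) (g₂ • (H₂ : Set G)) := by
  refine ⟨wordDist S g₁ g₂, fun N q => ?_⟩
  have hmem : ∀ {H : Subgroup G} {g x : G}, x ∈ (conjSub g H : Set G) → x * g ∈ g • (H : Set G) := by
    intro H g x hx
    rw [mem_coset]
    obtain ⟨y, hy, rfl⟩ := hx
    simpa [mul_assoc] using hy
  have hB := wd_ball_finite hfin hS N
  have hB' : ((fun x => q * x * g₂⁻¹) '' {g : G | (wordLength S g : ℝ) ≤ N}).Finite := hB.image _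
  obtain ⟨x, hx, hxn⟩ := h.exists_notMem_finite hB'
  refine ⟨x * g₁, hmem hx.1, x * g₂, hmem hx.2, (wd_left x g₁ g₂).le, ?_⟩
  by_contra hcon
  push Not at hcon
  exact hxn ⟨q⁻¹ * (x * g₂), hcon.le, by simp [mul_assoc]⟩

end Word

/-- **Finite width.** A finite collection of stable subgroups has finite width: there is `n`
bounding the cardinality of any collection of pairwise distinct cosets whose corresponding
conjugates pairwise intersect in infinite subgroups. -/
theorem finite_width_of_stable {G : Type*} [Group G] (S : Set G) (hSfin : S.Finite)
    (hSgen : Subgroup.closure S = ⊤) (l : ℕ) (H : Fin l → Subgroup G)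
    (hstable : ∀ i, IsStableSubgroup S (H i)) :
    ∃ n : ℕ, ∀ (k : ℕ) (σ : Fin k → Fin l) (g : Fin k → G),
      (∀ i j : Fin k, i ≠ j → g i • (H (σ i) : Set G) ≠ g j • (H (σ j) : Set G)) →
      (∀ i j : Fin k, i ≠ j →
        ((conjSub (g i) (H (σ i)) : Set G) ∩ (conjSub (g j) (H (σ j)) : Set G)).Infinite) →
      k ≤ n := by
  classical
  choose K₀ ε₀ f hK hε hgood using fun i => good_coset hSgen (hstable i)
  have hd := wd_dlike hSgen
  have hK0 : ∀ i, 0 ≤ K₀ i := fun i => by linarith [hK i]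
  obtain ⟨C, hC⟩ := helly hd (K₀ := 1 + ∑ i, K₀ i) (ε₀ := ∑ i, ε₀ i)
    (F := fun K ε => ∑ i, |f i K ε|)
    (by linarith [Finset.sum_nonneg (fun i (_ : i ∈ Finset.univ) => hK0 i)])
    (Finset.sum_nonneg (fun i _ => hε i))
    (fun K ε => Finset.sum_nonneg (fun i _ => abs_nonneg _))
  have hBfin := wd_ball_finite hSfin hSgen C
  refine ⟨l * hBfin.toFinset.card, ?_⟩
  intro k σ g hdist hinf
  cases k with
  | zero => exact Nat.zero_le _
  | succ k =>
    obtain ⟨y, hy⟩ := hC k (fun i => g i • (H (σ i) : Set G))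
      (fun i => hgood (σ i) _ _ _
        (by linarith [Finset.single_le_sum (fun i _ => hK0 i) (Finset.mem_univ (σ i))])
        (Finset.single_le_sum (fun i _ => hε i) (Finset.mem_univ (σ i)))
        (fun K ε => (le_abs_self _).trans
          (Finset.single_le_sum (f := fun i => |f i K ε|) (fun i _ => abs_nonneg _)
            (Finset.mem_univ (σ i)))) (g i))
      (fun i => ⟨g i, by rw [mem_coset]; simp⟩)
      (fun i j hij => farContact_of_infinite hSfin hSgen (hinf i j hij))
    choose a haA ha using hy
    have hcoset : ∀ i, g i • (H (σ i) : Set G) = a i • (H (σ i) : Set G) := by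
      intro i
      have h1 := haA i
      simp only [mem_coset] at h1
      ext x
      rw [mem_coset, mem_coset]
      have e : (g i)⁻¹ * x = ((g i)⁻¹ * a i) * ((a i)⁻¹ * x) := by group
      rw [e]
      exact (H (σ i)).mul_mem_cancel_left h1
    have hinj : Set.InjOn (fun i : Fin (k + 1) => (σ i, y⁻¹ * a i))
        (Finset.univ : Finset (Fin (k + 1))) := by
      intro i _ j _ hij
      by_contra hne
      simp only [Prod.mk.injEq, mul_right_inj] at hij
      apply hdist i j hne
      rw [hcoset i, hcoset j, hij.1, hij.2]
    have := Finset.card_le_card_of_injOn (s := Finset.univ)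
      (t := (Finset.univ : Finset (Fin l)) ×ˢ hBfin.toFinset)
      (fun i : Fin (k + 1) => (σ i, y⁻¹ * a i))
      (fun i _ => by
        simp only [Finset.coe_product, Set.mem_prod, Finset.mem_coe, Finset.mem_univ, true_and,
          Set.Finite.mem_toFinset]
        exact ha i) hinj
    simpa [Finset.card_product] using this
end
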